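/- Let $S$ be a nonzero seminorm on an infinite-dimensional vector space $X$ over $\mathbb{F}$ (either $\mathbb{R}$ or $\mathbb{C}$). Then there exists a norm $N$ on $X$ such that $S$ is discontinuous at every point of $X$ with respect to the topology induced by $N$. -/

import Mathlib

/-!
If a Hamel basis `b` has `S (b i)` unbounded, then `S` is unbounded on the unit ball of the norm
`x ↦ ⨆ i, |xᵢ|` taken in the coordinates of `b`, hence on every ball around `0`; as
`S (x + v) ≥ S v - S x`, it is then discontinuous at every `x`. Such a basis exists because the
complement of the kernel of a nonzero seminorm spans `X`: take a basis from that complement and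
rescale its infinitely many vectors.
-/

open Filter Topology

/-- `S` is a seminorm on the `𝕜`-vector space `X`: nonnegative, absolutely
homogeneous, and subadditive. -/
def IsSeminormOn (𝕜 : Type*) [RCLike 𝕜] {X : Type*} [AddCommGroup X] [Module 𝕜 X]
    (S : X → ℝ) : Prop :=
  (∀ x, 0 ≤ S x) ∧ (∀ (a : 𝕜) (x : X), S (a • x) = ‖a‖ * S x) ∧
    (∀ x y, S (x + y) ≤ S x + S y)

/-- `N` is a norm on the `𝕜`-vector space `X`: a positive-definite seminorm. -/
def IsNormOn (𝕜 : Type*) [RCLike 𝕜] {X : Type*} [AddCommGroup X] [Module 𝕜 X]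
    (N : X → ℝ) : Prop :=
  IsSeminormOn 𝕜 N ∧ ∀ x : X, x ≠ 0 → 0 < N x

/-- `S` is continuous at `x` with respect to the metric topology induced by `N`
via the distance `d(x, y) = N (x - y)`. -/
def ContinuousAtWrt {X : Type*} [AddCommGroup X] (N S : X → ℝ) (x : X) : Prop :=
  ∀ ε : ℝ, 0 < ε → ∃ δ : ℝ, 0 < δ ∧ ∀ y : X, N (y - x) < δ → |S y - S x| < ε

theorem span_setOf_seminorm_ne_zero {R E : Type*} [SeminormedRing R] [AddCommGroup E] [Module R E]
    {p : Seminorm R E} (hp : p ≠ 0) : Submodule.span R {x | p x ≠ 0} = ⊤ := by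
  obtain ⟨u, hu : p u ≠ 0⟩ := DFunLike.ne_iff.1 hp
  refine eq_top_iff.2 fun x _ => ?_
  by_cases hx : p x = 0
  · have hxu : p (x + u) ≠ 0 := fun h => hu <| le_antisymm
      (by simpa [h, hx] using map_sub_le_add p (x + u) x) (apply_nonneg p u)
    have hsub : x + u - u ∈ Submodule.span R {x | p x ≠ 0} :=
      Submodule.sub_mem _ (Submodule.subset_span hxu) (Submodule.subset_span hu)
    rwa [add_sub_cancel_right] at hsub
  · exact Submodule.subset_span hx

theorem exists_not_bddAbove_range (α : Type*) [Infinite α] :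
    ∃ r : α → ℝ, ¬ BddAbove (Set.range r) := by
  let e := Infinite.natEmbedding α
  refine ⟨fun a => ((Function.invFun e a : ℕ) : ℝ), not_bddAbove_iff.2 fun C => ?_⟩
  obtain ⟨n, hn⟩ := exists_nat_gt C
  exact ⟨n, ⟨e n, congrArg Nat.cast (Function.leftInverse_invFun e.injective n)⟩, hn⟩

section NormedField

variable {𝕜 E ι : Type*} [NormedField 𝕜] [AddCommGroup E] [Module 𝕜 E]

theorem exists_basis_forall_seminorm_ne_zero {p : Seminorm 𝕜 E} (hp : p ≠ 0) :
    ∃ (s : Set E) (b : Module.Basis s 𝕜 E), ∀ i, p (b i) ≠ 0 :=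
  let hspan := (span_setOf_seminorm_ne_zero hp).ge
  ⟨_, .ofSpan hspan, fun i => Module.Basis.ofSpan_subset hspan ⟨i, rfl⟩⟩

/-- The supremum norm of the coordinates in the basis `b`. The supremum is taken in
`Seminorm 𝕜 E`, where it would be `0` if the family were unbounded; see
`coordSupSeminorm.bddAbove_range_comp_coord`. -/
noncomputable def coordSupSeminorm (b : Module.Basis ι 𝕜 E) : Seminorm 𝕜 E :=
  ⨆ i, (normSeminorm 𝕜 𝕜).comp (b.coord i)

namespace coordSupSeminorm

theorem bddAbove_range_comp_coord (b : Module.Basis ι 𝕜 E) :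
    BddAbove (Set.range fun i => (normSeminorm 𝕜 𝕜).comp (b.coord i)) := by
  refine Seminorm.bddAbove_range_iff.2 fun x => Set.Finite.bddAbove ?_
  exact ((b.repr x).finite_range.image norm).subset (Set.range_comp norm (b.repr x)).le

theorem norm_coord_le (b : Module.Basis ι 𝕜 E) (i : ι) (x : E) :
    ‖b.coord i x‖ ≤ coordSupSeminorm b x :=
  le_ciSup (bddAbove_range_comp_coord b) i x

theorem eq_zero_of_apply_eq_zero {b : Module.Basis ι 𝕜 E} {x : E}
    (hx : coordSupSeminorm b x = 0) : x = 0 :=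
  b.forall_coord_eq_zero_iff.1 fun i => norm_le_zero_iff.1 (hx ▸ norm_coord_le b i x)

theorem apply_basis_le_one (b : Module.Basis ι 𝕜 E) (i : ι) : coordSupSeminorm b (b i) ≤ 1 := by
  classical
  rw [coordSupSeminorm, Seminorm.iSup_apply (bddAbove_range_comp_coord b)]
  refine Real.iSup_le (fun j => ?_) zero_le_one
  by_cases hij : i = j <;> simp [hij]

end coordSupSeminorm

end NormedField

section NontriviallyNormedField

variable {𝕜 E ι : Type*} [NontriviallyNormedField 𝕜] [AddCommGroup E] [Module 𝕜 E]
  {p N : Seminorm 𝕜 E}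

theorem exists_basis_forall_lt_seminorm (b : Module.Basis ι 𝕜 E) (hb : ∀ i, p (b i) ≠ 0)
    (r : ι → ℝ) : ∃ b' : Module.Basis ι 𝕜 E, ∀ i, r i < p (b' i) := by
  have hscale (i : ι) : ∃ c : 𝕜ˣ, r i < p (c • b i) := by
    have hpos : 0 < p (b i) := (apply_nonneg p _).lt_of_ne' (hb i)
    obtain ⟨c, hc⟩ := NormedField.exists_lt_norm 𝕜 (max 0 (r i / p (b i)))
    obtain ⟨hc0, hcr⟩ := max_lt_iff.1 hc
    refine ⟨.mk0 c (norm_pos_iff.1 hc0), ?_⟩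
    rwa [Units.smul_mk0, map_smul_eq_mul, ← div_lt_iff₀ hpos]
  choose c hc using hscale
  exact ⟨b.unitsSMul c, fun i => by simpa only [Module.Basis.unitsSMul_apply] using hc i⟩

theorem exists_basis_not_bddAbove_seminorm (hinf : ¬ FiniteDimensional 𝕜 E) (hp : p ≠ 0) :
    ∃ (s : Set E) (b : Module.Basis s 𝕜 E), ¬ BddAbove (Set.range fun i => p (b i)) := by
  obtain ⟨s, b, hb⟩ := exists_basis_forall_seminorm_ne_zero hp
  have : Infinite s := not_finite_iff_infinite.1 fun _ => hinf (Module.Finite.of_basis b)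
  obtain ⟨r, hr⟩ := exists_not_bddAbove_range s
  obtain ⟨b', hb'⟩ := exists_basis_forall_lt_seminorm b hb r
  exact ⟨s, b', fun h => hr (h.range_mono _ fun i => (hb' i).le)⟩

theorem not_continuousAtWrt_of_not_bddAbove_closedBall
    (h : ¬ BddAbove (p '' N.closedBall 0 1)) (x : E) : ¬ ContinuousAtWrt N p x := by
  intro hcont
  obtain ⟨δ, hδ, hball⟩ := hcont 1 one_pos
  obtain ⟨c, hc0, hcδ⟩ := NormedField.exists_norm_lt 𝕜 hδ
  obtain ⟨_, ⟨v, hv, rfl⟩, hpv⟩ := not_bddAbove_iff.1 h ((2 * p x + 1) / ‖c‖)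
  have hNv : N (c • v) < δ := calc
    N (c • v) = ‖c‖ * N v := map_smul_eq_mul N c v
    _ ≤ ‖c‖ := mul_le_of_le_one_right hc0.le (N.mem_closedBall_zero.1 hv)
    _ < δ := hcδ
  have hpcv : 2 * p x + 1 < p (c • v) := by
    rwa [map_smul_eq_mul, ← div_lt_iff₀' hc0]
  have hclose : |p (x + c • v) - p x| < 1 := hball _ (by rwa [add_sub_cancel_left])
  have htri : p (c • v) ≤ p (x + c • v) + p x := by
    simpa only [add_sub_cancel_left] using map_sub_le_add p (x + c • v) x
  linarith [(abs_lt.1 hclose).2]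

theorem exists_norm_seminorm_discontinuous_general (hinf : ¬ FiniteDimensional 𝕜 E) (hp : p ≠ 0) :
    ∃ N : Seminorm 𝕜 E, (∀ x, N x = 0 → x = 0) ∧ ∀ x, ¬ ContinuousAtWrt N p x := by
  obtain ⟨s, b, hb⟩ := exists_basis_not_bddAbove_seminorm hinf hp
  refine ⟨coordSupSeminorm b, fun _ => coordSupSeminorm.eq_zero_of_apply_eq_zero,
    not_continuousAtWrt_of_not_bddAbove_closedBall fun h => hb (h.mono ?_)⟩
  rintro _ ⟨i, rfl⟩
  exact ⟨b i, (Seminorm.mem_closedBall_zero _).2 (coordSupSeminorm.apply_basis_le_one b i), rfl⟩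

end NontriviallyNormedField

section RCLike

variable {𝕜 X : Type*} [RCLike 𝕜] [AddCommGroup X] [Module 𝕜 X]

/-- The bundled form of a function satisfying `IsSeminormOn`, which gives access to the library of
seminorms. -/
def IsSeminormOn.toSeminorm {S : X → ℝ} (hS : IsSeminormOn 𝕜 S) : Seminorm 𝕜 X :=
  Seminorm.of S hS.2.2 hS.2.1

theorem isNormOn_of_seminorm {N : Seminorm 𝕜 X} (hN : ∀ x, N x = 0 → x = 0) : IsNormOn 𝕜 N :=
  ⟨⟨apply_nonneg N, map_smul_eq_mul N, map_add_le_add N⟩,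
    fun x hx => (apply_nonneg N x).lt_of_ne' (mt (hN x) hx)⟩

end RCLike

/-- For every nonzero seminorm S on an infinite-dimensional vector space X
over ℝ or ℂ, there exists a norm N on X with respect to which S is discontinuous at
every point. -/
theorem exists_norm_seminorm_discontinuous
    {𝕜 X : Type*} [RCLike 𝕜] [AddCommGroup X] [Module 𝕜 X]
    (hinf : ¬ FiniteDimensional 𝕜 X)
    (S : X → ℝ) (hS : IsSeminormOn 𝕜 S) (hS0 : ∃ x : X, S x ≠ 0) :
    ∃ N : X → ℝ, IsNormOn 𝕜 N ∧ ∀ x : X, ¬ ContinuousAtWrt N S x := by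
  obtain ⟨N, hN, hdisc⟩ :=
    exists_norm_seminorm_discontinuous_general (p := hS.toSeminorm) hinf (DFunLike.ne_iff.2 hS0)
  exact ⟨N, isNormOn_of_seminorm hN, hdisc⟩
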